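/- arXiv:1109.5202 — 3 statements merged into one kernel-verified Lean document; each statement's English description precedes it below -/
import Mathlib

section
/- Let n and r be positive integers and let x_{ik} (1 ≤ i ≤ n, 1 ≤ k ≤ r) be arbitrary nonnegative real numbers. Set c_i := Σ_k x_{ik} and c := max_i c_i. Then c·Σ_k (Σ_i x_{ik})² − (Σ_i c_i)·(Σ_{i,k} x_{ik}²) ≤ c·(Σ_i c_i)² − (Σ_i c_i)·(Σ_i c_i²). Moreover, if min_i c_i > 0, then equality holds if and only if either (i) x_{ik} = x_{jk} for all i, j, k, or (ii) there exists some l such that x_{ik} = 0 for all i and all k ≠ l. -/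
/-- Harcos' inequality (Appendix): for nonnegative reals `x i k` with row sums
`c i = Σ_k x i k` and `c = max_i c i`,
`c·Σ_k (Σ_i x i k)² − (Σ_i c i)·Σ_{i,k} x i k² ≤ c·(Σ_i c i)² − (Σ_i c i)·Σ_i c i²`,
and, assuming `min_i c i > 0`, equality holds iff all rows are equal or all columns
but one vanish. -/
theorem stmt_0 (n r : ℕ) (hn : 0 < n) (hr : 0 < r)
    (x : Fin n → Fin r → ℝ) (hx : ∀ i k, 0 ≤ x i k)
    (c : Fin n → ℝ) (hc : ∀ i, c i = ∑ k, x i k)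
    (cm : ℝ) (hcm : IsGreatest (Set.range c) cm) :
    cm * (∑ k, (∑ i, x i k) ^ 2) - (∑ i, c i) * (∑ i, ∑ k, (x i k) ^ 2) ≤
        cm * (∑ i, c i) ^ 2 - (∑ i, c i) * (∑ i, (c i) ^ 2) ∧
    ((∀ i, 0 < c i) →
      (cm * (∑ k, (∑ i, x i k) ^ 2) - (∑ i, c i) * (∑ i, ∑ k, (x i k) ^ 2) =
          cm * (∑ i, c i) ^ 2 - (∑ i, c i) * (∑ i, (c i) ^ 2) ↔
        (∀ i j k, x i k = x j k) ∨ ∃ l, ∀ i k, k ≠ l → x i k = 0)) := by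
  classical
  obtain ⟨⟨i0, hi0⟩, hub⟩ := hcm
  have hle : ∀ i, c i ≤ cm := fun i => hub ⟨i, rfl⟩
  have hc0 : ∀ i, 0 ≤ c i := fun i => by
    rw [hc]; exact Finset.sum_nonneg fun k _ => hx i k
  have hcm0 : 0 ≤ cm := hi0 ▸ hc0 i0
  obtain ⟨p, hp⟩ : ∃ p : Fin n → Fin r → ℝ, ∀ i k, p i k = x i k / c i := ⟨_, fun _ _ => rfl⟩
  have hp0 : ∀ i k, 0 ≤ p i k := fun i k => by rw [hp]; exact div_nonneg (hx i k) (hc0 i)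
  have hxp : ∀ i k, x i k = c i * p i k := by
    intro i k
    rw [hp]
    by_cases h : c i = 0
    · have h1 : ∑ k, x i k = 0 := by rw [← hc, h]
      have h2 := (Finset.sum_eq_zero_iff_of_nonneg (fun k _ => hx i k)).1 h1 k (Finset.mem_univ k)
      rw [h2, h]; simp
    · field_simp
  have hps : ∀ i, ∑ k, p i k = c i / c i := by
    intro i
    simp only [hp]
    rw [← Finset.sum_div, ← hc]
  have hps1 : ∀ i, ∑ k, p i k ≤ 1 := fun i => by rw [hps]; exact div_self_le_one _
  have hple : ∀ i k, p i k ≤ 1 := fun i k =>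
    (Finset.single_le_sum (fun k _ => hp0 i k) (Finset.mem_univ k)).trans (hps1 i)
  obtain ⟨G, hG⟩ : ∃ G : Fin n → Fin n → ℝ, ∀ i j, G i j = ∑ k, p i k * p j k :=
    ⟨_, fun _ _ => rfl⟩
  have hGs : ∀ i j, G i j = G j i := fun i j => by
    rw [hG, hG]; exact Finset.sum_congr rfl fun k _ => mul_comm _ _
  have hq : ∀ i, 0 ≤ 1 - G i i := by
    intro i
    have : G i i ≤ ∑ k, p i k := by
      rw [hG]
      exact Finset.sum_le_sum fun k _ => mul_le_of_le_one_left (hp0 i k) (hple i k)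
    linarith [hps1 i]
  have hd : ∀ i j, G i i + G j j - 2 * G i j = ∑ k, (p i k - p j k) ^ 2 := by
    intro i j
    rw [hG, hG, hG, Finset.mul_sum, ← Finset.sum_add_distrib, ← Finset.sum_sub_distrib]
    exact Finset.sum_congr rfl fun k _ => by ring
  have hd0 : ∀ i j, 0 ≤ G i i + G j j - 2 * G i j := fun i j => by
    rw [hd]; exact Finset.sum_nonneg fun k _ => sq_nonneg _
  obtain ⟨T, hT⟩ : ∃ T : Fin n → Fin n → ℝ, ∀ i j, T i j = c i * c j *
      (cm * (G i i + G j j - 2 * G i j) + (cm - c i) * (1 - G i i) + (cm - c j) * (1 - G j j)) :=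
    ⟨_, fun _ _ => rfl⟩
  have hT0 : ∀ i j, 0 ≤ T i j := by
    intro i j
    rw [hT]
    have h1 := mul_nonneg hcm0 (hd0 i j)
    have h2 := mul_nonneg (sub_nonneg.2 (hle i)) (hq i)
    have h3 := mul_nonneg (sub_nonneg.2 (hle j)) (hq j)
    exact mul_nonneg (mul_nonneg (hc0 i) (hc0 j)) (by linarith)
  have e1 : ∑ k, (∑ i, x i k) ^ 2 = ∑ i, ∑ j, c i * c j * G i j := by
    simp only [hG, sq, Finset.sum_mul_sum]
    simp only [Finset.mul_sum]
    rw [Finset.sum_comm]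
    refine Finset.sum_congr rfl fun i _ => ?_
    rw [Finset.sum_comm]
    refine Finset.sum_congr rfl fun j _ => Finset.sum_congr rfl fun k _ => ?_
    rw [hxp i k, hxp j k]; ring
  have e2 : ∑ i, ∑ k, (x i k) ^ 2 = ∑ i, c i ^ 2 * G i i := by
    refine Finset.sum_congr rfl fun i _ => ?_
    rw [hG, Finset.mul_sum]
    exact Finset.sum_congr rfl fun k _ => by rw [hxp i k]; ring
  have key1 : (cm * (∑ i, c i) ^ 2 - (∑ i, c i) * (∑ i, (c i) ^ 2)) -
      (cm * (∑ k, (∑ i, x i k) ^ 2) - (∑ i, c i) * (∑ i, ∑ k, (x i k) ^ 2)) =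
      ∑ i, ∑ j, c i * c j * (cm * (1 - G i j) - c i * (1 - G i i)) := by
    rw [e1, e2, mul_comm (∑ i, c i) (∑ i, c i ^ 2), mul_comm (∑ i, c i) (∑ i, c i ^ 2 * G i i), sq]
    simp only [Finset.sum_mul_sum]
    simp only [Finset.mul_sum, ← Finset.sum_sub_distrib]
    exact Finset.sum_congr rfl fun i _ => Finset.sum_congr rfl fun j _ => by ring
  have key : 2 * ((cm * (∑ i, c i) ^ 2 - (∑ i, c i) * (∑ i, (c i) ^ 2)) -
      (cm * (∑ k, (∑ i, x i k) ^ 2) - (∑ i, c i) * (∑ i, ∑ k, (x i k) ^ 2))) =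
      ∑ i, ∑ j, T i j := by
    rw [key1, two_mul]
    nth_rewrite 2 [Finset.sum_comm]
    simp only [← Finset.sum_add_distrib]
    refine Finset.sum_congr rfl fun i _ => Finset.sum_congr rfl fun j _ => ?_
    rw [hT, hGs j i]; ring
  have hTs : 0 ≤ ∑ i, ∑ j, T i j :=
    Finset.sum_nonneg fun i _ => Finset.sum_nonneg fun j _ => hT0 i j
  refine ⟨by linarith, fun hpos => ?_⟩
  have hps' : ∀ i, ∑ k, p i k = 1 := fun i => by rw [hps, div_self (hpos i).ne']
  have hcmp : 0 < cm := hi0 ▸ hpos i0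
  constructor
  · intro heq
    have hz : ∑ i, ∑ j, T i j = 0 := by rw [← key, heq]; ring
    have hz' : ∀ i j, T i j = 0 := by
      intro i j
      have h1 := (Finset.sum_eq_zero_iff_of_nonneg
        (fun i _ => Finset.sum_nonneg fun j _ => hT0 i j)).1 hz i (Finset.mem_univ i)
      exact (Finset.sum_eq_zero_iff_of_nonneg (fun j _ => hT0 i j)).1 h1 j (Finset.mem_univ j)
    have hsp : ∀ i j, G i i + G j j - 2 * G i j = 0 ∧ (cm - c i) * (1 - G i i) = 0 := by
      intro i j
      have h0 := hz' i j
      rw [hT] at h0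
      have h0 := (mul_eq_zero.1 h0).resolve_left (mul_pos (hpos i) (hpos j)).ne'
      have h1 := mul_nonneg hcm0 (hd0 i j)
      have h2 := mul_nonneg (sub_nonneg.2 (hle i)) (hq i)
      have h3 := mul_nonneg (sub_nonneg.2 (hle j)) (hq j)
      have h4 : cm * (G i i + G j j - 2 * G i j) = 0 := by linarith
      exact ⟨(mul_eq_zero.1 h4).resolve_left hcmp.ne', by linarith⟩
    have hpe : ∀ i j k, p i k = p j k := by
      intro i j k
      have h := (hsp i j).1
      rw [hd] at h
      have := (Finset.sum_eq_zero_iff_of_nonneg (fun k _ => sq_nonneg _)).1 h k (Finset.mem_univ k)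
      exact sub_eq_zero.1 (pow_eq_zero_iff (two_ne_zero) |>.1 this)
    by_cases hg : 1 - G i0 i0 = 0
    · right
      have h1 : ∑ k, (p i0 k - p i0 k * p i0 k) = 0 := by
        rw [Finset.sum_sub_distrib, ← hG, hps' i0]; exact hg
      have h2 : ∀ k, p i0 k - p i0 k * p i0 k = 0 := fun k =>
        (Finset.sum_eq_zero_iff_of_nonneg (fun k _ => sub_nonneg.2
          (mul_le_of_le_one_left (hp0 i0 k) (hple i0 k)))).1 h1 k (Finset.mem_univ k)
      obtain ⟨l, hl⟩ : ∃ l, p i0 l ≠ 0 := by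
        by_contra! hcon
        have := hps' i0
        simp [hcon] at this
      have hl1 : p i0 l = 1 := by
        have h3 : p i0 l * (1 - p i0 l) = 0 := by linarith [h2 l]
        linarith [(mul_eq_zero.1 h3).resolve_left hl]
      refine ⟨l, fun i k hk => ?_⟩
      have h4 : p i0 k + p i0 l ≤ 1 := by
        rw [← hps' i0, ← Finset.sum_pair hk]
        exact Finset.sum_le_sum_of_subset_of_nonneg (Finset.subset_univ _) fun k _ _ => hp0 i0 k
      have h5 : p i0 k = 0 := by linarith [hp0 i0 k]
      rw [hxp, hpe i i0 k, h5, mul_zero]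
    · left
      have hci : ∀ i, c i = cm := by
        intro i
        have h := (hsp i i).2
        have : G i i = G i0 i0 := by
          rw [hG, hG]; exact Finset.sum_congr rfl fun k _ => by rw [hpe i i0 k]
        rw [this] at h
        linarith [(mul_eq_zero.1 h).resolve_right hg]
      intro i j k
      rw [hxp i k, hxp j k, hci i, hci j, hpe i j k]
  · intro h
    have hz : ∀ i j, T i j = 0 := by
      intro i j
      rw [hT]
      rcases h with h | ⟨l, h⟩
      · have hci : ∀ i, c i = cm := fun i => by
          rw [← hi0, hc, hc]; exact Finset.sum_congr rfl fun k _ => h i i0 k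
        have hpe : ∀ i k, p i k = p i0 k := fun i k => by
          rw [hp, hp, hci i, hci i0, h i i0 k]
        have hGe : ∀ i j, G i j = G i0 i0 := fun i j => by
          rw [hG, hG]; exact Finset.sum_congr rfl fun k _ => by rw [hpe i k, hpe j k]
        rw [hci i, hci j, hGe i i, hGe j j, hGe i j]; ring
      · have hpz : ∀ i k, k ≠ l → p i k = 0 := fun i k hk => by rw [hp, h i k hk, zero_div]
        have hpl : ∀ i, p i l = 1 := fun i => by
          rw [← hps' i]
          exact (Finset.sum_eq_single l (fun k _ hk => hpz i k hk) (by simp)).symm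
        have hGe : ∀ i j, G i j = 1 := fun i j => by
          rw [hG, Finset.sum_eq_single l (fun k _ hk => by rw [hpz i k hk, zero_mul]) (by simp),
            hpl, hpl, one_mul]
        rw [hGe i i, hGe j j, hGe i j]; ring
    have hs : ∑ i, ∑ j, T i j = 0 := by simp [hz]
    linarith
end

section
/- Let ν¹,…,νˢ and μ be non-zero partitions such that ν¹,…,νˢ sum to μ up to permutation of parts. Then Σ_{p=1}^s σ_μ(νᵖ) ≤ σ_μ(μ), and equality holds if and only if either (i) s = 1 and μ = ν¹, or (ii) ν¹,…,νˢ and μ are all rectangular partitions of the same length. -/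
/-- A partition of `n`: a weakly decreasing, eventually zero sequence of natural
numbers (0-indexed: `parts i` is `λ_{i+1}`) summing to `n`. -/
structure PartitionOf (n : ℕ) where
  parts : ℕ → ℕ
  antitone : ∀ ⦃i j : ℕ⦄, i ≤ j → parts j ≤ parts i
  eventually_zero : ∃ N, ∀ i, N ≤ i → parts i = 0
  sum_eq : ∑ᶠ i, parts i = n

/-- A partition is rectangular if all its (non-zero) parts are equal. -/
def Rectangular {n : ℕ} (lam : PartitionOf n) : Prop :=
  ∀ i j, lam.parts i ≠ 0 → lam.parts j ≠ 0 → lam.parts i = lam.parts j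

/-- The length (number of non-zero parts) of a partition. -/
noncomputable def partLength {n : ℕ} (lam : PartitionOf n) : ℕ :=
  Set.ncard {i | lam.parts i ≠ 0}

/-- `σ_μ(ν) := μ₁·|ν|² − |μ|·Σ_i νᵢ²` for `μ` a partition of `n` and `ν` of `m`. -/
noncomputable def sigmaAux {n m : ℕ} (μ : PartitionOf n) (ν : PartitionOf m) : ℤ :=
  (μ.parts 0 : ℤ) * (m : ℤ) ^ 2 - (n : ℤ) * ∑ᶠ i, (ν.parts i : ℤ) ^ 2

/-- `ν¹,…,νˢ` sum to `μ` up to permutation of parts: there are rearrangements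
`xᵖ` of the zero-padded part sequences of the `νᵖ` with `Σ_p xᵖᵢ = μᵢ` for all `i`. -/
def SumsToUpToPerm {s : ℕ} {m : Fin s → ℕ} {n : ℕ}
    (ν : ∀ p : Fin s, PartitionOf (m p)) (μ : PartitionOf n) : Prop :=
  ∃ x : Fin s → ℕ → ℕ,
    (∀ p, ∃ σ : Equiv.Perm ℕ, x p = (ν p).parts ∘ σ) ∧ ∀ i, ∑ p, x p i = μ.parts i

lemma aux_le (f g : ℕ → ℕ) (hf : ∀ ⦃i j : ℕ⦄, i ≤ j → f j ≤ f i)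
    (hg : ∀ ⦃i j : ℕ⦄, i ≤ j → g j ≤ g i) (σ : Equiv.Perm ℕ) (h : g = f ∘ σ) (i : ℕ) :
    g i ≤ f i := by
  by_contra hlt
  push Not at hlt
  have hmap : ∀ j ∈ Finset.range (i+1), σ j ∈ Finset.range i := by
    intro j hj
    rw [Finset.mem_range] at *
    by_contra hge
    push Not at hge
    have h1 := hf hge
    have h2 := hg (Nat.lt_succ_iff.mp hj)
    have h3 : g j = f (σ j) := by rw [h]; rfl
    omega
  have := Finset.card_le_card_of_injOn σ hmap (fun a _ b _ hab => σ.injective hab)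
  simp at this

lemma aux_finsum {M : Type*} [AddCommMonoid M] (N : ℕ) (f : ℕ → M) (h : ∀ i, N ≤ i → f i = 0) :
    ∑ᶠ i, f i = ∑ i ∈ Finset.range N, f i := by
  apply finsum_eq_sum_of_support_subset
  intro i hi
  simp only [Finset.coe_range, Set.mem_Iio]
  by_contra hc
  exact hi (h i (by omega))

lemma aux_rect {n : ℕ} (lam : PartitionOf n) (h : Rectangular lam) :
    n = partLength lam * lam.parts 0 ∧
    ∑ᶠ i, (lam.parts i : ℤ) ^ 2 = (partLength lam : ℤ) * (lam.parts 0 : ℤ) ^ 2 := by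
  obtain ⟨N, hN⟩ := lam.eventually_zero
  have hval : ∀ i, lam.parts i ≠ 0 → lam.parts i = lam.parts 0 := by
    intro i hi
    have := lam.antitone (Nat.zero_le i)
    exact h i 0 hi (by omega)
  have hlen : partLength lam = ((Finset.range N).filter (fun i => lam.parts i ≠ 0)).card := by
    unfold partLength
    rw [← Set.ncard_coe_finset]
    congr 1
    ext i
    simp only [Set.mem_ofPred_eq, Finset.coe_filter, Finset.mem_range]
    constructor
    · intro hi
      refine ⟨?_, hi⟩
      by_contra hc
      exact hi (hN i (by omega))
    · exact fun hi => hi.2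
  constructor
  · rw [hlen]
    conv_lhs => rw [← lam.sum_eq]
    rw [aux_finsum N _ hN, ← Finset.sum_filter_ne_zero, Finset.sum_congr rfl
      (g := fun _ => lam.parts 0)]
    · simp
    · intro i hi
      exact hval i (Finset.mem_filter.mp hi).2
  · rw [hlen, aux_finsum N _ (fun i hi => by simp [hN i hi])]
    rw [← Finset.sum_filter_of_ne (p := fun i => lam.parts i ≠ 0), Finset.sum_congr rfl
      (g := fun _ => (lam.parts 0 : ℤ)^2)]
    · simp
    · intro i hi
      rw [hval i (Finset.mem_filter.mp hi).2]
    · intro i _ hi h0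
      simp [h0] at hi

theorem stmt_3 (s : ℕ) (hs : 1 ≤ s) (m : Fin s → ℕ) (hm : ∀ p, 1 ≤ m p)
    (n : ℕ) (hn : 1 ≤ n) (ν : ∀ p, PartitionOf (m p)) (μ : PartitionOf n)
    (hsum : SumsToUpToPerm ν μ) :
    ∑ p, sigmaAux μ (ν p) ≤ sigmaAux μ μ ∧
    (∑ p, sigmaAux μ (ν p) = sigmaAux μ μ ↔
      (s = 1 ∧ ∀ p, (ν p).parts = μ.parts) ∨
      ((∀ p, Rectangular (ν p)) ∧ Rectangular μ ∧
        ∀ p, partLength (ν p) = partLength μ)) := by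
  obtain ⟨x, hx, hxs⟩ := hsum
  obtain ⟨N, hN⟩ := μ.eventually_zero
  choose σ hσ using hx
  have hxle : ∀ p i, x p i ≤ μ.parts i := fun p i => by
    rw [← hxs i]
    exact Finset.single_le_sum (f := fun p => x p i) (fun _ _ => Nat.zero_le _) (Finset.mem_univ p)
  have hx0 : ∀ p i, N ≤ i → x p i = 0 := fun p i hi => by
    have := hxle p i
    have := hN i hi
    omega
  have hmx : ∀ p, (m p : ℤ) = ∑ i ∈ Finset.range N, (x p i : ℤ) := by
    intro p
    have h1 : ∑ᶠ i, x p i = m p := by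
      rw [← (ν p).sum_eq, hσ p]
      exact finsum_comp_equiv (σ p)
    rw [← h1, aux_finsum N _ (hx0 p)]
    push_cast; rfl
  have hsq : ∀ p, ∑ᶠ i, ((ν p).parts i : ℤ)^2 = ∑ i ∈ Finset.range N, (x p i : ℤ)^2 := by
    intro p
    rw [← aux_finsum N _ (fun i hi => by simp [hx0 p i hi]), hσ p]
    exact (finsum_comp_equiv (σ p) (f := fun i => ((ν p).parts i : ℤ)^2)).symm
  have hnx : (n : ℤ) = ∑ i ∈ Finset.range N, (μ.parts i : ℤ) := by
    conv_lhs => rw [← μ.sum_eq]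
    rw [aux_finsum N _ hN]
    push_cast; rfl
  have hsqμ : ∑ᶠ i, (μ.parts i : ℤ)^2 = ∑ i ∈ Finset.range N, (μ.parts i : ℤ)^2 :=
    aux_finsum N _ (fun i hi => by simp [hN i hi])
  have hxsZ : ∀ i, (μ.parts i : ℤ) = ∑ p, (x p i : ℤ) := fun i => by
    rw [← hxs i]; push_cast; rfl
  have hnm : (n : ℤ) = ∑ p, (m p : ℤ) := by
    rw [hnx, Finset.sum_congr rfl (fun p _ => hmx p), Finset.sum_comm]
    exact Finset.sum_congr rfl (fun i _ => hxsZ i)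
  have hmn : ∀ p, (m p : ℤ) ≤ n := fun p => by
    rw [hnm]
    exact Finset.single_le_sum (f := fun p => (m p : ℤ)) (fun _ _ => by positivity)
      (Finset.mem_univ p)
  set M : ℤ := (μ.parts 0 : ℤ) with hM
  have hμM : ∀ i, (μ.parts i : ℤ) ≤ M := fun i => by
    rw [hM]
    exact_mod_cast μ.antitone (Nat.zero_le i)
  let T : Fin s → ℕ → ℤ := fun p i =>
    (M - μ.parts i) * ((x p i : ℤ) * (n - m p)^2 + ((μ.parts i : ℤ) - x p i) * (m p : ℤ)^2)
      + ((x p i : ℤ) * n - m p * μ.parts i)^2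
  have hA : ∀ p i, 0 ≤ (M - μ.parts i) *
      ((x p i : ℤ) * (n - m p)^2 + ((μ.parts i : ℤ) - x p i) * (m p : ℤ)^2) := by
    intro p i
    have h1 := hμM i
    have h2 : (x p i : ℤ) ≤ μ.parts i := by exact_mod_cast hxle p i
    have h3 : (0 : ℤ) ≤ M - μ.parts i := by linarith
    have h4 : (0 : ℤ) ≤ (μ.parts i : ℤ) - x p i := by linarith
    positivity
  have hT : ∀ p i, 0 ≤ T p i := fun p i => add_nonneg (hA p i) (sq_nonneg _)
  have hTs : ∀ p, ∑ i ∈ Finset.range N, T p i =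
      n * (M * m p * (n - m p) - n * ∑ i ∈ Finset.range N, (x p i : ℤ) * (μ.parts i - x p i)) := by
    intro p
    have e : ∀ i, T p i = (M * (n - m p)^2 - M * (m p)^2) * (x p i : ℤ)
        + (M * (m p : ℤ)^2) * (μ.parts i : ℤ)
        - (n:ℤ)^2 * ((x p i : ℤ) * (μ.parts i - x p i)) := by
      intro i
      simp only [T]
      ring
    simp only [e]
    rw [Finset.sum_sub_distrib, Finset.sum_add_distrib, ← Finset.mul_sum, ← Finset.mul_sum,
      ← Finset.mul_sum, ← hmx, ← hnx]
    ring
  have key : ∑ p, ∑ i ∈ Finset.range N, T p i =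
      n * (sigmaAux μ μ - ∑ p, sigmaAux μ (ν p)) := by
    simp only [hTs]
    rw [← Finset.mul_sum]
    congr 1
    simp only [sigmaAux, hsq, hsqμ]
    rw [Finset.sum_sub_distrib, Finset.sum_sub_distrib, ← Finset.mul_sum, ← Finset.mul_sum,
      ← Finset.mul_sum, ← hM]
    have e1 : ∑ p, M * (m p : ℤ) * (n - m p) = M * n * ∑ p, (m p : ℤ) - M * ∑ p, (m p : ℤ)^2 := by
      rw [Finset.mul_sum, Finset.mul_sum, ← Finset.sum_sub_distrib]
      exact Finset.sum_congr rfl (fun p _ => by ring)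
    have e2 : ∑ p, ∑ i ∈ Finset.range N, (x p i : ℤ) * (μ.parts i - x p i) =
        ∑ i ∈ Finset.range N, (μ.parts i : ℤ)^2
          - ∑ p, ∑ i ∈ Finset.range N, (x p i : ℤ)^2 := by
      have : ∑ i ∈ Finset.range N, (μ.parts i : ℤ)^2
          = ∑ p, ∑ i ∈ Finset.range N, (x p i : ℤ) * μ.parts i := by
        rw [Finset.sum_comm]
        refine Finset.sum_congr rfl (fun i _ => ?_)
        rw [← Finset.sum_mul, ← hxsZ, sq]
      rw [this, ← Finset.sum_sub_distrib]
      refine Finset.sum_congr rfl (fun p _ => ?_)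
      rw [← Finset.sum_sub_distrib]
      exact Finset.sum_congr rfl (fun i _ => by ring)
    rw [e1, e2, ← hnm]
    ring
  have hnpos : (0 : ℤ) < n := by exact_mod_cast hn
  have hnonneg : 0 ≤ ∑ p, ∑ i ∈ Finset.range N, T p i :=
    Finset.sum_nonneg (fun p _ => Finset.sum_nonneg (fun i _ => hT p i))
  refine ⟨?_, ?_, ?_⟩
  · rw [key] at hnonneg
    have := nonneg_of_mul_nonneg_right hnonneg hnpos
    linarith
  · intro heq
    rcases Nat.lt_or_ge 1 s with hs2 | hs1
    · right
      rw [heq, sub_self, mul_zero] at key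
      have hz : ∀ p i, T p i = 0 := by
        intro p i
        rcases Nat.lt_or_ge i N with hi | hi
        · have h1 := (Finset.sum_eq_zero_iff_of_nonneg
            (fun p _ => Finset.sum_nonneg (fun i _ => hT p i))).mp key p (Finset.mem_univ p)
          exact (Finset.sum_eq_zero_iff_of_nonneg (fun i _ => hT p i)).mp h1 i
            (Finset.mem_range.mpr hi)
        · simp [T, hx0 p i hi, hN i hi]
      have hprop : ∀ p i, (x p i : ℤ) * n = m p * μ.parts i := by
        intro p i
        have h1 := hz p i
        have h2 := hA p i
        have h3 := sq_nonneg ((x p i : ℤ) * n - m p * μ.parts i)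
        have h4 : ((x p i : ℤ) * n - m p * μ.parts i)^2 = 0 := by
          simp only [T] at h1
          linarith
        have := pow_eq_zero_iff (two_ne_zero) |>.mp h4
        linarith
      have hmlt : ∀ p, (m p : ℤ) < n := by
        intro p
        obtain ⟨q, hq⟩ : ∃ q : Fin s, q ≠ p := by
          haveI : Nontrivial (Fin s) := Fin.nontrivial_iff_two_le.mpr hs2
          exact exists_ne p
        rw [hnm]
        refine Finset.single_lt_sum (f := fun p => (m p : ℤ)) hq (Finset.mem_univ _) (Finset.mem_univ _) ?_ ?_
        · exact_mod_cast hm q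
        · intro k _ _; positivity
      have hxne : ∀ p i, x p i ≠ 0 ↔ μ.parts i ≠ 0 := by
        intro p i
        have h1 : x p i * n = m p * μ.parts i := by exact_mod_cast hprop p i
        have h2 := hm p
        rw [not_iff_not]
        constructor
        · intro h
          rw [h, zero_mul] at h1
          rcases mul_eq_zero.mp h1.symm with h | h
          · omega
          · exact h
        · intro h
          rw [h, mul_zero] at h1
          rcases mul_eq_zero.mp h1 with h | h
          · exact h
          · omega
      have hμv : ∀ i, μ.parts i ≠ 0 → (μ.parts i : ℤ) = M := by
        intro i hi
        let p : Fin s := ⟨0, by omega⟩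
        have h1 := hz p i
        have h2 : (M - μ.parts i) *
            ((x p i : ℤ) * (n - m p)^2 + ((μ.parts i : ℤ) - x p i) * (m p : ℤ)^2) = 0 := by
          have h3 := sq_nonneg ((x p i : ℤ) * n - m p * μ.parts i)
          have h4 := hA p i
          simp only [T] at h1
          linarith
        rcases mul_eq_zero.mp h2 with h | h
        · linarith
        · exfalso
          have h5 : (0 : ℤ) < x p i := by
            have := (hxne p i).mpr hi
            exact_mod_cast Nat.pos_of_ne_zero this
          have h6 : (0 : ℤ) < n - m p := by linarith [hmlt p]
          have h7 : (0 : ℤ) ≤ (μ.parts i : ℤ) - x p i := by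
            have : (x p i : ℤ) ≤ μ.parts i := by exact_mod_cast hxle p i
            linarith
          have : 0 < (x p i : ℤ) * (n - m p)^2 + ((μ.parts i : ℤ) - x p i) * (m p : ℤ)^2 := by
            positivity
          linarith
      have hνx : ∀ p i, (ν p).parts i = x p ((σ p).symm i) := by
        intro p i
        rw [hσ p]; simp
      refine ⟨?_, ?_, ?_⟩
      · intro p i j hi hj
        rw [hνx] at *
        have h1 := hprop p ((σ p).symm i)
        have h2 := hprop p ((σ p).symm j)
        rw [hμv _ ((hxne p _).mp hi)] at h1
        rw [hμv _ ((hxne p _).mp hj), ← h1] at h2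
        have := mul_right_cancel₀ hnpos.ne' h2
        rw [hνx]
        exact_mod_cast this.symm
      · intro i j hi hj
        have h1 := hμv i hi
        have h2 := hμv j hj
        exact_mod_cast h1.trans h2.symm
      · intro p
        unfold partLength
        have : {i | (ν p).parts i ≠ 0} = (σ p) '' {i | μ.parts i ≠ 0} := by
          ext i
          simp only [Set.mem_ofPred_eq, Set.mem_image_equiv, ← hxne p, hνx]
        rw [this, Set.ncard_image_of_injective _ (σ p).injective]
    · left
      have hs' : s = 1 := by omega
      subst hs'
      refine ⟨rfl, fun p => ?_⟩
      have hp : x p = μ.parts := by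
        funext i
        rw [← hxs i, Fin.sum_univ_one, Subsingleton.elim p 0]
      have h1 : μ.parts = (ν p).parts ∘ (σ p) := by rw [← hp, hσ p]
      have h2 : (ν p).parts = μ.parts ∘ (σ p).symm := by
        rw [h1]; funext i; simp
      funext i
      exact le_antisymm (aux_le _ _ μ.antitone (ν p).antitone _ h2 i)
        (aux_le _ _ (ν p).antitone μ.antitone _ h1 i)
  · rintro (⟨rfl, h⟩ | ⟨h1, h2, h3⟩)
    · have hm0 : m 0 = n := by rw [← (ν 0).sum_eq, h 0, μ.sum_eq]
      rw [Fin.sum_univ_one]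
      simp only [sigmaAux, h 0, hm0]
    · obtain ⟨a1, a2⟩ := aux_rect μ h2
      have a1' : (n : ℤ) = partLength μ * μ.parts 0 := by exact_mod_cast a1
      have hz : ∀ p, sigmaAux μ (ν p) = 0 := by
        intro p
        obtain ⟨b1, b2⟩ := aux_rect (ν p) (h1 p)
        have b1' : (m p : ℤ) = partLength (ν p) * (ν p).parts 0 := by exact_mod_cast b1
        unfold sigmaAux
        rw [b2, b1', h3 p, a1']
        ring
      have hz' : sigmaAux μ μ = 0 := by
        unfold sigmaAux
        rw [a2, a1']
        ring
      simp [hz, hz']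
end

section
/- Fix integers g ≥ 0, k ≥ 1, n ≥ 1 and a k-tuple 𝛍 = (μ¹,…,μᵏ) of partitions of n with δ(𝛍) ≥ 0. Then d_𝛍 = 2 if and only if δ(𝛍) = 0 and every μⁱ is rectangular. Moreover, when d_𝛍 = 2, writing lᵢ := l(μⁱ), either g = 1 and lᵢ = 1 for all i, or g = 0 and the multiset of those lᵢ that are greater than 1 is one of {2,2,2,2}, {3,3,3}, {2,4,4}, {2,3,6}. -/
/-- `d_𝛍 = n²(2g−2+k) − Σ_{i,j}(μⁱⱼ)² + 2`. -/
noncomputable def dStat (g k : ℕ) {n : ℕ} (μ : Fin k → PartitionOf n) : ℤ :=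
  (2 * (g : ℤ) - 2 + (k : ℤ)) * (n : ℤ) ^ 2
    - (∑ i, ∑ᶠ j, ((μ i).parts j : ℤ) ^ 2) + 2

/-- `δ(𝛍) = (2g−2+k)n − Σ_i μⁱ₁`. -/
noncomputable def deltaStatZ (g k : ℕ) {n : ℕ} (μ : Fin k → PartitionOf n) : ℤ :=
  (2 * (g : ℤ) - 2 + (k : ℤ)) * (n : ℤ) - ∑ i, ((μ i).parts 0 : ℤ)

theorem finsum_range {M : Type*} [AddCommMonoid M] (f : ℕ → M) (N : ℕ)
    (h : ∀ i, N ≤ i → f i = 0) : ∑ᶠ i, f i = ∑ i ∈ Finset.range N, f i := by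
  apply finsum_eq_sum_of_support_subset
  intro i hi
  simp only [Finset.coe_range, Set.mem_Iio]
  by_contra hc
  exact hi (h i (not_lt.mp hc))

theorem rect_iff {n : ℕ} (p : PartitionOf n) :
    Rectangular p ↔ ∀ j, p.parts j = 0 ∨ p.parts j = p.parts 0 := by
  constructor
  · intro h j
    by_cases hj : p.parts j = 0
    · exact Or.inl hj
    · have := p.antitone (Nat.zero_le j)
      exact Or.inr (h j 0 hj (by omega))
  · intro h i j hi hj
    have := h i
    have := h j
    omega

theorem part_def {n : ℕ} (p : PartitionOf n) :
    0 ≤ (n : ℤ) * p.parts 0 - ∑ᶠ j, (p.parts j : ℤ) ^ 2 ∧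
    ((n : ℤ) * p.parts 0 - ∑ᶠ j, (p.parts j : ℤ) ^ 2 = 0 ↔ Rectangular p) := by
  obtain ⟨N, hN⟩ := p.eventually_zero
  have h1 := p.sum_eq
  rw [finsum_range _ N hN] at h1
  rw [finsum_range (fun j => (p.parts j : ℤ) ^ 2) N (fun i hi => by simp [hN i hi])]
  have h2 : (n : ℤ) * p.parts 0 - ∑ j ∈ Finset.range N, (p.parts j : ℤ) ^ 2
      = ∑ j ∈ Finset.range N, (p.parts j : ℤ) * ((p.parts 0 : ℤ) - p.parts j) := by
    have h1' : (n : ℤ) = ∑ j ∈ Finset.range N, (p.parts j : ℤ) := by exact_mod_cast h1.symm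
    rw [show (n : ℤ) * p.parts 0 = (∑ j ∈ Finset.range N, (p.parts j : ℤ)) * p.parts 0 from
      congrArg (fun t : ℤ => t * (p.parts 0 : ℤ)) h1']
    rw [Finset.sum_mul, ← Finset.sum_sub_distrib]
    exact Finset.sum_congr rfl fun _ _ => by ring
  have h3 : ∀ j ∈ Finset.range N, 0 ≤ (p.parts j : ℤ) * ((p.parts 0 : ℤ) - p.parts j) := by
    intro j _
    have := p.antitone (Nat.zero_le j)
    exact mul_nonneg (by positivity) (by omega)
  rw [h2]
  refine ⟨Finset.sum_nonneg h3, ?_⟩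
  rw [Finset.sum_eq_zero_iff_of_nonneg h3, rect_iff]
  constructor
  · intro h j
    by_cases hj : N ≤ j
    · exact Or.inl (hN j hj)
    · have := h j (by simpa using hj)
      rcases mul_eq_zero.mp this with h | h
      · left; exact_mod_cast h
      · right; omega
  · intro h j _
    rcases h j with h | h <;> simp [h]

theorem rect_len {n : ℕ} (p : PartitionOf n) (h : Rectangular p) :
    n = partLength p * p.parts 0 := by
  obtain ⟨N, hN⟩ := p.eventually_zero
  have h1 := p.sum_eq
  rw [finsum_range _ N hN] at h1
  rw [rect_iff] at h
  have h2 : {i | p.parts i ≠ 0} = ((Finset.range N).filter (fun i => p.parts i ≠ 0) : Set ℕ) := by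
    ext i
    simp only [Set.mem_setOf_eq, Finset.coe_filter, Finset.mem_range]
    constructor
    · intro hi
      refine ⟨?_, hi⟩
      by_contra hc
      exact hi (hN i (not_lt.mp hc))
    · exact fun hi => hi.2
  unfold partLength
  rw [h2, Set.ncard_coe_finset]
  rw [← Finset.sum_filter_ne_zero] at h1
  rw [Finset.sum_congr rfl (g := fun _ => p.parts 0)] at h1
  · simpa using h1.symm
  · intro j hj
    rcases h j with h | h
    · simp [h] at hj
    · exact h

theorem three_case (a b c : ℕ) (ha : 2 ≤ a) (hab : a ≤ b) (hbc : b ≤ c)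
    (h : b * c + a * c + a * b = a * b * c) :
    (a = 3 ∧ b = 3 ∧ c = 3) ∨ (a = 2 ∧ b = 4 ∧ c = 4) ∨ (a = 2 ∧ b = 3 ∧ c = 6) := by
  have hc : 0 < c := by omega
  have hb : 0 < b := by omega
  have ha3 : a ≤ 3 := by
    by_contra hh
    have h4 : 4 ≤ a := by omega
    have e1 : a * c ≤ b * c := Nat.mul_le_mul_right _ hab
    have e2 : a * b ≤ b * c := by
      rw [mul_comm b c]; exact Nat.mul_le_mul_right _ (hab.trans hbc)
    have e3 : 4 * (b * c) ≤ a * (b * c) := Nat.mul_le_mul_right _ h4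
    have : 0 < b * c := Nat.mul_pos hb hc
    rw [mul_assoc] at h
    omega
  have hb4 : b ≤ 4 := by
    by_contra hh
    have h5 : 5 ≤ b := by omega
    have e3 : 5 * c ≤ b * c := Nat.mul_le_mul_right _ h5
    interval_cases a <;> nlinarith
  interval_cases a <;> interval_cases b <;> omega

theorem mult_case (s : Multiset ℕ) (h2 : ∀ x ∈ s, 2 ≤ x)
    (hs : (s.map (fun x : ℕ => (1 : ℚ) - 1 / x)).sum = 2) :
    s = {2, 2, 2, 2} ∨ s = {3, 3, 3} ∨ s = {2, 4, 4} ∨ s = {2, 3, 6} := by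
  have hlow : ∀ x : ℕ, 2 ≤ x → (1 : ℚ) / 2 ≤ 1 - 1 / x := by
    intro x hx
    have : (1 : ℚ) / x ≤ 1 / 2 :=
      one_div_le_one_div_of_le (by norm_num) (by exact_mod_cast hx)
    linarith
  have hup : ∀ x : ℕ, 2 ≤ x → (1 : ℚ) - 1 / x < 1 := by
    intro x hx
    have : (0 : ℚ) < 1 / x := by positivity
    linarith
  have heq : ∀ x : ℕ, 2 ≤ x → (1 : ℚ) - 1 / x ≤ 1 / 2 → x = 2 := by
    intro x hx h
    have h0 : (0 : ℚ) < x := by positivity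
    have : (1 : ℚ) / 2 ≤ 1 / x := by linarith
    rw [div_le_div_iff₀ (by norm_num) h0] at this
    have : x ≤ 2 := by exact_mod_cast (by linarith : (x : ℚ) ≤ 2)
    omega
  have hsort : (s.sort (· ≤ ·)).Pairwise (· ≤ ·) := Multiset.pairwise_sort s (· ≤ ·)
  have hcoe : ((s.sort (· ≤ ·) : List ℕ) : Multiset ℕ) = s := Multiset.sort_eq s (· ≤ ·)
  generalize s.sort (· ≤ ·) = l at hsort hcoe
  subst hcoe
  simp only [Multiset.map_coe, Multiset.sum_coe, Multiset.mem_coe] at hs h2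
  match l, hsort, hs, h2 with
  | [], _, hs, _ => norm_num at hs
  | [a], _, hs, h2 =>
    simp only [List.map_cons, List.map_nil, List.sum_cons, List.sum_nil] at hs
    have := hup a (h2 a (by simp))
    linarith
  | [a, b], _, hs, h2 =>
    simp only [List.map_cons, List.map_nil, List.sum_cons, List.sum_nil] at hs
    have := hup a (h2 a (by simp))
    have := hup b (h2 b (by simp))
    linarith
  | [a, b, c], hsort, hs, h2 =>
    simp only [List.map_cons, List.map_nil, List.sum_cons, List.sum_nil] at hs
    have ha := h2 a (by simp)
    have hb := h2 b (by simp)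
    have hc := h2 c (by simp)
    have hab : a ≤ b := by simp at hsort; omega
    have hbc : b ≤ c := by simp at hsort; omega
    have h : b * c + a * c + a * b = a * b * c := by
      have ha0 : (a : ℚ) ≠ 0 := by positivity
      have hb0 : (b : ℚ) ≠ 0 := by positivity
      have hc0 : (c : ℚ) ≠ 0 := by positivity
      field_simp at hs
      have : (b * c + a * c + a * b : ℚ) = a * b * c := by linarith
      exact_mod_cast this
    rcases three_case a b c ha hab hbc h with ⟨rfl, rfl, rfl⟩ | ⟨rfl, rfl, rfl⟩ | ⟨rfl, rfl, rfl⟩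
    · exact Or.inr (Or.inl rfl)
    · exact Or.inr (Or.inr (Or.inl rfl))
    · exact Or.inr (Or.inr (Or.inr rfl))
  | [a, b, c, d], _, hs, h2 =>
    simp only [List.map_cons, List.map_nil, List.sum_cons, List.sum_nil] at hs
    have ha := h2 a (by simp)
    have hb := h2 b (by simp)
    have hc := h2 c (by simp)
    have hd := h2 d (by simp)
    have la := hlow a ha
    have lb := hlow b hb
    have lc := hlow c hc
    have ld := hlow d hd
    have ea := heq a ha (by linarith)
    have eb := heq b hb (by linarith)
    have ec := heq c hc (by linarith)
    have ed := heq d hd (by linarith)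
    subst ea eb ec ed
    exact Or.inl rfl
  | a :: b :: c :: d :: e :: t, _, hs, h2 =>
    simp only [List.map_cons, List.sum_cons] at hs
    have la := hlow a (h2 a (by simp))
    have lb := hlow b (h2 b (by simp))
    have lc := hlow c (h2 c (by simp))
    have ld := hlow d (h2 d (by simp))
    have le := hlow e (h2 e (by simp))
    have : 0 ≤ (t.map (fun x : ℕ => (1 : ℚ) - 1 / x)).sum := by
      apply List.sum_nonneg
      intro y hy
      obtain ⟨x, hx, rfl⟩ := List.mem_map.mp hy
      have := hlow x (h2 x (by simp [hx]))
      linarith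
    linarith

theorem sum_filter_gt (s : Multiset ℕ) (h : ∀ x ∈ s, 1 ≤ x) :
    ((s.filter (fun l => 1 < l)).map (fun x : ℕ => (1 : ℚ) - 1 / x)).sum
      = (s.map (fun x : ℕ => (1 : ℚ) - 1 / x)).sum := by
  induction s using Multiset.induction_on with
  | empty => simp
  | cons a s ih =>
    have ih := ih fun x hx => h x (Multiset.mem_cons_of_mem hx)
    have ha := h a (Multiset.mem_cons_self a s)
    by_cases h1 : 1 < a
    · rw [Multiset.filter_cons_of_pos _ h1]
      simp only [Multiset.map_cons, Multiset.sum_cons, ih]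
    · rw [Multiset.filter_cons_of_neg _ h1, ih]
      have : a = 1 := by omega
      subst this
      simp

/-- If `δ(𝛍) ≥ 0` then `d_𝛍 = 2` iff `δ(𝛍) = 0` and every `μⁱ` is rectangular;
moreover in that case either `g = 1` and all lengths are `1`, or `g = 0` and the
multiset of lengths `> 1` is one of `{2,2,2,2}, {3,3,3}, {2,4,4}, {2,3,6}`. -/
theorem stmt_6 (g k n : ℕ) (hk : 1 ≤ k) (hn : 1 ≤ n)
    (μ : Fin k → PartitionOf n) (hδ : 0 ≤ deltaStatZ g k μ) :
    (dStat g k μ = 2 ↔ deltaStatZ g k μ = 0 ∧ ∀ i, Rectangular (μ i)) ∧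
    (dStat g k μ = 2 →
      (g = 1 ∧ ∀ i, partLength (μ i) = 1) ∨
      (g = 0 ∧
        ((Finset.univ.val.map fun i => partLength (μ i)).filter (fun l => 1 < l)
            = ({2, 2, 2, 2} : Multiset ℕ) ∨
         (Finset.univ.val.map fun i => partLength (μ i)).filter (fun l => 1 < l)
            = ({3, 3, 3} : Multiset ℕ) ∨
         (Finset.univ.val.map fun i => partLength (μ i)).filter (fun l => 1 < l)
            = ({2, 4, 4} : Multiset ℕ) ∨
         (Finset.univ.val.map fun i => partLength (μ i)).filter (fun l => 1 < l)
            = ({2, 3, 6} : Multiset ℕ)))) := by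
  have hid : dStat g k μ - 2 = n * deltaStatZ g k μ
      + ∑ i, ((n : ℤ) * (μ i).parts 0 - ∑ᶠ j, ((μ i).parts j : ℤ) ^ 2) := by
    unfold dStat deltaStatZ
    rw [Finset.sum_sub_distrib, ← Finset.mul_sum]
    ring
  have hn0 : (0 : ℤ) < n := by exact_mod_cast hn
  have hnn : ∀ i ∈ Finset.univ,
      0 ≤ (n : ℤ) * (μ i).parts 0 - ∑ᶠ j, ((μ i).parts j : ℤ) ^ 2 :=
    fun i _ => (part_def (μ i)).1
  have hiff : dStat g k μ = 2 ↔ deltaStatZ g k μ = 0 ∧ ∀ i, Rectangular (μ i) := by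
    have hsum : (∑ i, ((n : ℤ) * (μ i).parts 0 - ∑ᶠ j, ((μ i).parts j : ℤ) ^ 2)) = 0 ↔
        ∀ i, Rectangular (μ i) := by
      rw [Finset.sum_eq_zero_iff_of_nonneg hnn]
      simp only [Finset.mem_univ, true_imp_iff]
      exact forall_congr' fun i => (part_def (μ i)).2
    rw [← hsum]
    have h1 := Finset.sum_nonneg hnn
    have h2 : 0 ≤ (n : ℤ) * deltaStatZ g k μ := mul_nonneg hn0.le hδ
    constructor
    · intro h
      have h3 : (n : ℤ) * deltaStatZ g k μ = 0 := by linarith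
      refine ⟨(mul_eq_zero.mp h3).resolve_left hn0.ne', by linarith⟩
    · rintro ⟨h3, h4⟩
      rw [h3, h4] at hid
      linarith
  refine ⟨hiff, fun h => ?_⟩
  obtain ⟨h0, hr⟩ := hiff.mp h
  have hlen := fun i => rect_len (μ i) (hr i)
  have hl1 : ∀ i, 1 ≤ partLength (μ i) := by
    intro i
    rcases Nat.eq_zero_or_pos (partLength (μ i)) with hz | hz
    · have := hlen i
      rw [hz, zero_mul] at this
      omega
    · exact hz
  have hp1 : ∀ i, 1 ≤ (μ i).parts 0 := by
    intro i
    rcases Nat.eq_zero_or_pos ((μ i).parts 0) with hz | hz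
    · have := hlen i
      rw [hz, mul_zero] at this
      omega
    · exact hz
  have hle : ∀ i ∈ Finset.univ, 0 ≤ (n : ℤ) - (μ i).parts 0 := by
    intro i _
    have := hlen i
    have h1 := Nat.mul_le_mul_right ((μ i).parts 0) (hl1 i)
    omega
  have hsum : ∑ i, ((n : ℤ) - (μ i).parts 0) = (2 - 2 * (g : ℤ)) * n := by
    unfold deltaStatZ at h0
    rw [Finset.sum_sub_distrib]
    simp only [Finset.sum_const, Finset.card_univ, Fintype.card_fin, nsmul_eq_mul]
    linarith
  have hg : g ≤ 1 := by
    by_contra hc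
    have := Finset.sum_nonneg hle
    have h2 : (2 : ℤ) ≤ g := by exact_mod_cast (by omega : 2 ≤ g)
    nlinarith
  interval_cases g
  · right
    refine ⟨rfl, mult_case _ ?_ ?_⟩
    · intro x hx
      exact (Multiset.mem_filter.mp hx).2
    · rw [sum_filter_gt]
      · rw [Multiset.map_map]
        change ∑ i, ((1 : ℚ) - 1 / (partLength (μ i) : ℕ)) = 2
        have hn0' : (n : ℚ) ≠ 0 := by exact_mod_cast hn0.ne'
        have hq : ∑ i, ((n : ℚ) - (μ i).parts 0) = 2 * n := by
          have : ((∑ i, ((n : ℤ) - (μ i).parts 0) : ℤ) : ℚ) = ((2 - 2 * ((0 : ℕ) : ℤ)) * n : ℤ) := by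
            rw [hsum]
          push_cast at this
          linarith
        apply mul_right_cancel₀ hn0'
        rw [← hq, Finset.sum_mul]
        refine Finset.sum_congr rfl fun i _ => ?_
        have h3 : (n : ℚ) = partLength (μ i) * (μ i).parts 0 := by exact_mod_cast hlen i
        have h4 : (partLength (μ i) : ℚ) ≠ 0 := by
          have := hl1 i
          positivity
        rw [h3]
        field_simp
      · intro x hx
        obtain ⟨i, _, rfl⟩ := Multiset.mem_map.mp hx
        exact hl1 i
  · left
    refine ⟨rfl, fun i => ?_⟩
    have h3 : ∑ i, ((n : ℤ) - (μ i).parts 0) = 0 := by rw [hsum]; norm_num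
    have h4 := (Finset.sum_eq_zero_iff_of_nonneg hle).mp h3 i (Finset.mem_univ i)
    have h5 : n = (μ i).parts 0 := by omega
    have h6 := hlen i
    rw [← h5] at h6
    exact Nat.eq_of_mul_eq_mul_right hn (by rw [one_mul]; exact h6.symm)
end
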